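/- arXiv:2212.13759 — 3 statements merged into one kernel-verified Lean document; each statement's English description precedes it below -/
import Mathlib

section
/- Let d ≥ 1, let A ⊆ ℝ^d be open, and let (u_k) be a sequence in L¹(A) converging to u strongly in L¹(A). Let A' ⊆ ℝ^d be open and bounded with compact closure contained in A, and let (ε_k) be positive reals with ε_k → 0. Define w_k(x,y) := u_k(x + ε_k y) for x ∈ A' and y ∈ Q'. Then for all sufficiently large k the function w_k is well defined on A' × Q' (i.e. x + ε_k y ∈ A for all x ∈ A', y ∈ Q'), and ∫_{A' × Q'} |w_k(x,y) − u(x)| dx dy → 0 as k → ∞, i.e. w_k converges in L¹(A' × Q') to the function (x,y) ↦ u(x). -/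
open MeasureTheory Filter Topology

/-- The open unit cube in `ℝ^d` centred at the origin. -/
def unitCube (d : ℕ) : Set (Fin d → ℝ) := {y | ∀ i, |y i| < 1 / 2}

/-!
Translations act continuously on `L^p`, `1 ≤ p < ∞`, jointly in the translation and the function:
if `u_k → u` in `L^p` and `h → 0`, then `u_k(· + h) → u` in `L^p`. On a smaller set this only needs
`L^p` convergence on `A`, after extending all functions by zero outside `A`. For `y` in a bounded
set the translation vectors `ε_k y` tend to zero uniformly, so the slices of
`(x, y) ↦ u_k(x + ε_k y) - u(x)` at fixed `y` are uniformly small in `L^p(A')`, and Tonelli's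
theorem gives convergence on the product.
-/

section

open scoped ENNReal Pointwise

theorem eLpNorm_restrict_comp_add_right_sub_le_indicator {G F : Type*} [Add G]
    [MeasurableSpace G] [NormedAddCommGroup F] {μ : Measure G} {p : ℝ≥0∞} {u f : G → F}
    {A A' : Set G} (hA' : MeasurableSet A') (hA'A : A' ⊆ A) {h : G} (hh : ∀ x ∈ A', x + h ∈ A) :
    eLpNorm (fun x ↦ u (x + h) - f x) p (μ.restrict A') ≤
      eLpNorm (fun x ↦ A.indicator u (x + h) - A.indicator f x) p μ := by
  rw [← eLpNorm_indicator_eq_eLpNorm_restrict hA']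
  refine eLpNorm_mono fun x ↦ ?_
  by_cases hx : x ∈ A'
  · simp [hx, hA'A hx, hh x hx]
  · simp [hx]

section Translation

variable {ι G F : Type*} [AddGroup G] [TopologicalSpace G] [IsTopologicalAddGroup G]
  [MeasurableSpace G] [BorelSpace G] [NormedAddCommGroup F] {μ : Measure G}
  [IsLocallyFiniteMeasure μ] [μ.InnerRegularCompactLTTop] [μ.IsAddRightInvariant]
  {p : ℝ≥0∞} [Fact (1 ≤ p)] {l : Filter ι} {u : ι → G → F} {f : G → F}

theorem tendsto_eLpNorm_comp_add_right_sub (hp : p ≠ ∞) (hu : ∀ i, MemLp (u i) p μ)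
    (hf : MemLp f p μ) (huf : Tendsto (fun i ↦ eLpNorm (u i - f) p μ) l (𝓝 0)) :
    Tendsto (fun q : ι × G ↦ eLpNorm (fun x ↦ u q.1 (x + q.2) - f x) p μ) (l ×ˢ 𝓝 0) (𝓝 0) := by
  let translation : C(G, C(G, G)) := .curry ⟨fun q ↦ q.2 + q.1, by fun_prop⟩
  have measurePreserving (h : G) : MeasurePreserving (translation h) μ μ :=
    measurePreserving_add_right μ h
  have huf_Lp : Tendsto (fun i ↦ (hu i).toLp (u i)) l (𝓝 (hf.toLp f)) :=
    (Lp.tendsto_Lp_iff_tendsto_eLpNorm'' u hu f hf).2 huf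
  have translated := (huf_Lp.comp tendsto_fst).compMeasurePreservingLp
    ((translation.continuous.tendsto 0).comp (tendsto_snd (f := l)))
    (fun q ↦ measurePreserving q.2) (measurePreserving 0) hp
  simp only [Function.comp_apply, Lp.toLp_compMeasurePreserving] at translated
  simpa [translation, Function.comp_def, Pi.sub_def] using
    (Lp.tendsto_Lp_iff_tendsto_eLpNorm'' _ _ _ _).1 translated

theorem tendsto_eLpNorm_restrict_comp_add_right_sub (hp : p ≠ ∞) {A A' V : Set G}
    (hA : MeasurableSet A) (hA' : MeasurableSet A') (hV : V ∈ 𝓝 0) (hA'V : A' + V ⊆ A)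
    (hu : ∀ i, MemLp (u i) p (μ.restrict A)) (hf : MemLp f p (μ.restrict A))
    (huf : Tendsto (fun i ↦ eLpNorm (u i - f) p (μ.restrict A)) l (𝓝 0)) :
    Tendsto (fun q : ι × G ↦ eLpNorm (fun x ↦ u q.1 (x + q.2) - f x) p (μ.restrict A'))
      (l ×ˢ 𝓝 0) (𝓝 0) := by
  have hA'A : A' ⊆ A := (Set.subset_add_left A' (mem_of_mem_nhds hV)).trans hA'V
  have huf_indicator :
      Tendsto (fun i ↦ eLpNorm (A.indicator (u i) - A.indicator f) p μ) l (𝓝 0) := by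
    simpa only [← Set.indicator_sub', eLpNorm_indicator_eq_eLpNorm_restrict hA] using huf
  have hu_indicator (i : ι) : MemLp (A.indicator (u i)) p μ :=
    (memLp_indicator_iff_restrict hA).2 (hu i)
  have hf_indicator : MemLp (A.indicator f) p μ := (memLp_indicator_iff_restrict hA).2 hf
  have tendsto_indicator := tendsto_eLpNorm_comp_add_right_sub hp hu_indicator hf_indicator
    huf_indicator
  refine tendsto_of_tendsto_of_tendsto_of_le_of_le' tendsto_const_nhds tendsto_indicator
    (.of_forall fun _ ↦ zero_le) ?_
  filter_upwards [tendsto_snd.eventually hV] with q hq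
  exact eLpNorm_restrict_comp_add_right_sub_le_indicator hA' hA'A
    fun x hx ↦ hA'V (Set.add_mem_add hx hq)

end Translation

theorem eventually_forall_mem_smul_of_eventually_prod {ι 𝕜 E : Type*} [NormedDivisionRing 𝕜]
    [AddCommGroup E] [Module 𝕜 E] [TopologicalSpace E] {l : Filter ι} {ε : ι → 𝕜} {S : Set E}
    (hS : Bornology.IsVonNBounded 𝕜 S) (hε : Tendsto ε l (𝓝 0)) {P : ι × E → Prop}
    (hP : ∀ᶠ q in l ×ˢ 𝓝 0, P q) : ∀ᶠ i in l, ∀ y ∈ S, P (i, ε i • y) := by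
  obtain ⟨T, hT, V, hV, hTV⟩ := mem_prod_iff.1 hP
  have smul_subset : ∀ᶠ i in l, ε i • S ⊆ V :=
    (hS.tendsto_smallSets_nhds.comp hε).eventually (eventually_smallSets_subset.2 hV)
  filter_upwards [hT, smul_subset] with i hi hSV y hy
  exact hTV ⟨hi, hSV (Set.smul_mem_smul_set hy)⟩

section Slices

variable {α β F : Type*} [MeasurableSpace α] [MeasurableSpace β] [NormedAddCommGroup F]
  {μ : Measure α} {ν : Measure β} {p : ℝ≥0∞}

theorem lintegral_prod_le_lintegral_lintegral_swap [SFinite μ] [SFinite ν] (f : α × β → ℝ≥0∞) :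
    ∫⁻ z, f z ∂μ.prod ν ≤ ∫⁻ y, ∫⁻ x, f (x, y) ∂μ ∂ν := by
  obtain ⟨g, hg, hgf, hfg⟩ := exists_measurable_le_lintegral_eq (μ.prod ν) f
  rw [hfg, lintegral_prod_symm' g hg]
  gcongr
  exact hgf _

theorem eLpNorm_prod_le_of_ae_slice_le [SFinite μ] [SFinite ν] (hp₀ : p ≠ 0) (hp : p ≠ ∞)
    {f : α × β → F} {C : ℝ≥0∞} (hf : ∀ᵐ y ∂ν, eLpNorm (fun x ↦ f (x, y)) p μ ≤ C) :
    eLpNorm f p (μ.prod ν) ≤ C * ν Set.univ ^ (1 / p.toReal) := by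
  have hp_pos : 0 < p.toReal := ENNReal.toReal_pos hp₀ hp
  rw [eLpNorm_eq_lintegral_rpow_enorm_toReal hp₀ hp, one_div, ENNReal.rpow_inv_le_iff hp_pos,
    ENNReal.mul_rpow_of_nonneg _ _ hp_pos.le, ENNReal.rpow_inv_rpow hp_pos.ne']
  calc ∫⁻ z, ‖f z‖ₑ ^ p.toReal ∂μ.prod ν
      ≤ ∫⁻ y, ∫⁻ x, ‖f (x, y)‖ₑ ^ p.toReal ∂μ ∂ν := lintegral_prod_le_lintegral_lintegral_swap _
    _ ≤ ∫⁻ _, C ^ p.toReal ∂ν := by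
      refine lintegral_mono_ae (hf.mono fun y hy ↦ ?_)
      rwa [eLpNorm_eq_lintegral_rpow_enorm_toReal hp₀ hp, one_div,
        ENNReal.rpow_inv_le_iff hp_pos] at hy
    _ = C ^ p.toReal * ν Set.univ := lintegral_const _

theorem tendsto_eLpNorm_prod_of_ae_slice_le {ι : Type*} {l : Filter ι} [SFinite μ]
    [IsFiniteMeasure ν] (hp₀ : p ≠ 0) (hp : p ≠ ∞) {f : ι → α × β → F}
    (hf : ∀ η > 0, ∀ᶠ i in l, ∀ᵐ y ∂ν, eLpNorm (fun x ↦ f i (x, y)) p μ ≤ η) :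
    Tendsto (fun i ↦ eLpNorm (f i) p (μ.prod ν)) l (𝓝 0) := by
  refine ENNReal.tendsto_nhds_zero.2 fun δ hδ ↦ ?_
  have measure_rpow_ne_top : ν Set.univ ^ (1 / p.toReal) ≠ ∞ :=
    ENNReal.rpow_ne_top_of_nonneg (by positivity) (measure_ne_top ν _)
  obtain ⟨η, hη, hηδ⟩ := ENNReal.exists_nnreal_pos_mul_lt measure_rpow_ne_top hδ.ne'
  filter_upwards [hf η (by exact_mod_cast hη)] with i hi
  exact (eLpNorm_prod_le_of_ae_slice_le hp₀ hp hi).trans hηδ.le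

end Slices

section L1

variable {ι α F : Type*} [MeasurableSpace α] [NormedAddCommGroup F] {μ : Measure α}
  {l : Filter ι} {f : ι → α → F}

theorem tendsto_eLpNorm_one_of_tendsto_integral_norm (hf : ∀ i, Integrable (f i) μ)
    (h : Tendsto (fun i ↦ ∫ x, ‖f i x‖ ∂μ) l (𝓝 0)) :
    Tendsto (fun i ↦ eLpNorm (f i) 1 μ) l (𝓝 0) := by
  simpa only [eLpNorm_one_eq_lintegral_enorm, ofReal_integral_norm_eq_lintegral_enorm (hf _),
    ENNReal.ofReal_zero] using ENNReal.tendsto_ofReal h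

theorem tendsto_integral_norm_of_tendsto_eLpNorm_one
    (h : Tendsto (fun i ↦ eLpNorm (f i) 1 μ) l (𝓝 0)) :
    Tendsto (fun i ↦ ∫ x, ‖f i x‖ ∂μ) l (𝓝 0) := by
  refine tendsto_zero_iff_enorm_tendsto_zero.2 (tendsto_of_tendsto_of_tendsto_of_le_of_le
    tendsto_const_nhds h (fun _ ↦ zero_le) fun i ↦ ?_)
  simpa only [enorm_norm, eLpNorm_one_eq_lintegral_enorm] using
    enorm_integral_le_lintegral_enorm (fun x ↦ ‖f i x‖) (μ := μ)

end L1

theorem unitCube_eq_ball (d : ℕ) : unitCube d = Metric.ball 0 (1 / 2) := by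
  ext y
  simp [unitCube, pi_norm_lt_iff]

theorem statement2_general {ι E F : Type*} [NormedAddCommGroup E] [NormedSpace ℝ E]
    [FiniteDimensional ℝ E] [MeasurableSpace E] [BorelSpace E] [NormedAddCommGroup F]
    {μ : Measure E} [μ.IsAddHaarMeasure] {p : ℝ≥0∞} [Fact (1 ≤ p)] (hp : p ≠ ∞) {l : Filter ι}
    {A A' V Q : Set E} (hA : MeasurableSet A) (hA' : MeasurableSet A') (hV : V ∈ 𝓝 0)
    (hA'V : A' + V ⊆ A) (hQ : MeasurableSet Q) (hQ_bdd : Bornology.IsBounded Q)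
    {u : ι → E → F} {f : E → F} (hu : ∀ i, MemLp (u i) p (μ.restrict A))
    (hf : MemLp f p (μ.restrict A))
    (huf : Tendsto (fun i ↦ eLpNorm (u i - f) p (μ.restrict A)) l (𝓝 0))
    {ε : ι → ℝ} (hε : Tendsto ε l (𝓝 0)) :
    (∀ᶠ i in l, ∀ x ∈ A', ∀ y ∈ Q, x + ε i • y ∈ A) ∧
    Tendsto (fun i ↦ eLpNorm (fun z : E × E ↦ u i (z.1 + ε i • z.2) - f z.1) p
      ((μ.prod μ).restrict (A' ×ˢ Q))) l (𝓝 0) := by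
  have hQ_vonN := NormedSpace.isVonNBounded_of_isBounded ℝ hQ_bdd
  constructor
  · filter_upwards [eventually_forall_mem_smul_of_eventually_prod hQ_vonN hε
      (tendsto_snd.eventually hV)] with i hi x hx y hy
    exact hA'V (Set.add_mem_add hx (hi y hy))
  · have : IsFiniteMeasure (μ.restrict Q) := ⟨by simpa using hQ_bdd.measure_lt_top⟩
    rw [← Measure.prod_restrict]
    refine tendsto_eLpNorm_prod_of_ae_slice_le (one_pos.trans_le Fact.out).ne' hp
      fun η hη ↦ ?_
    have translation_small :=
      (tendsto_eLpNorm_restrict_comp_add_right_sub hp hA hA' hV hA'V hu hf huf).eventually_le_const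
        hη
    filter_upwards [eventually_forall_mem_smul_of_eventually_prod hQ_vonN hε translation_small]
      with i hi
    exact ae_restrict_of_forall_mem hQ hi

end

theorem statement2
    (d : ℕ) (hd : 1 ≤ d)
    (A : Set (Fin d → ℝ)) (hA_open : IsOpen A)
    (u : ℕ → (Fin d → ℝ) → ℝ) (ulim : (Fin d → ℝ) → ℝ)
    (hu_int : ∀ k, IntegrableOn (u k) A)
    (hulim_int : IntegrableOn ulim A)
    (hconv : Tendsto (fun k => ∫ x in A, |u k x - ulim x|) atTop (𝓝 0))
    (A' : Set (Fin d → ℝ)) (hA'_open : IsOpen A') (hA'_bdd : Bornology.IsBounded A')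
    (hA'_cpt : IsCompact (closure A')) (hA'_sub : closure A' ⊆ A)
    (ε : ℕ → ℝ) (hε_pos : ∀ k, 0 < ε k) (hε_lim : Tendsto ε atTop (𝓝 0)) :
    (∀ᶠ k in atTop, ∀ x ∈ A', ∀ y ∈ unitCube d, x + ε k • y ∈ A) ∧
    Tendsto
      (fun k => ∫ p in A' ×ˢ unitCube d, |u k (p.1 + ε k • p.2) - ulim p.1|)
      atTop (𝓝 0) := by
  obtain ⟨V, hV, hA'V⟩ := compact_open_separated_add_right hA'_cpt hA_open hA'_sub
  have hcube_meas : MeasurableSet (unitCube d) := unitCube_eq_ball d ▸ measurableSet_ball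
  have hcube_bdd : Bornology.IsBounded (unitCube d) := unitCube_eq_ball d ▸ Metric.isBounded_ball
  exact (statement2_general ENNReal.one_ne_top hA_open.measurableSet hA'_open.measurableSet hV
    ((Set.add_subset_add_right subset_closure).trans hA'V) hcube_meas hcube_bdd
    (fun k ↦ memLp_one_iff_integrable.2 (hu_int k)) (memLp_one_iff_integrable.2 hulim_int)
    (tendsto_eLpNorm_one_of_tendsto_integral_norm (fun k ↦ (hu_int k).sub hulim_int) hconv)
    hε_lim).imp_right tendsto_integral_norm_of_tendsto_eLpNorm_one
end

section
/- Let f : [0,∞) → [0,∞) be a lower semicontinuous nondecreasing function such that lim_{t→0⁺} f(t)/t = α and lim_{t→+∞} f(t) = β, where α, β ∈ (0,∞). Then there exist sequences (α_i)_{i∈ℕ} and (β_i)_{i∈ℕ} of strictly positive real numbers with sup_i α_i = α and sup_i β_i = β such that f(t) ≥ min(α_i t, β_i) for every i ∈ ℕ and every t ≥ 0. -/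
open Filter Topology

/-!
Call a pair of positive numbers `(a, b)` admissible if `t ↦ min (a * t) b` is a minorant of `f`.
Letting `t → 0⁺` and `t → ∞` shows `a ≤ α` and `b ≤ β`. Conversely, every positive slope `a < α` is
admissible with some height, since `f` lies above the line near `0` and above a positive constant
elsewhere; and every positive height `b < β` is admissible with a small enough slope, since a pair
already known to be admissible takes care of the bounded interval on which `f` may be less than `b`.
In general no admissible pair has both its slope close to `α` and its height close to `β`, so the
required sequence has to run through pairs of both kinds.
-/

section CountableSupremum

variable {ι γ δ : Type*} {s : Set ι}
  [LinearOrder γ] [TopologicalSpace γ] [OrderTopology γ] [FirstCountableTopology γ]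
  [LinearOrder δ] [TopologicalSpace δ] [OrderTopology δ] [FirstCountableTopology δ]
  {φ : ι → γ} {ψ : ι → δ} {x : γ} {y : δ}

theorem exists_countable_subset_isLUB_image (h : IsLUB (φ '' s) x) :
    ∃ t ⊆ s, t.Countable ∧ IsLUB (φ '' t) x := by
  rcases s.eq_empty_or_nonempty with rfl | hs
  · exact ⟨∅, subset_rfl, Set.countable_empty, h⟩
  obtain ⟨u, -, -, hu_lim, hu_mem⟩ := h.exists_seq_monotone_tendsto (hs.image φ)
  choose v hv_mem hv_eq using hu_mem
  have hv_range : Set.range v ⊆ s := Set.range_subset_iff.2 hv_mem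
  refine ⟨Set.range v, hv_range, Set.countable_range v,
    fun z hz => h.1 (Set.image_mono hv_range hz), fun z hz => ?_⟩
  exact le_of_tendsto' hu_lim fun n => hv_eq n ▸ hz (Set.mem_image_of_mem φ ⟨n, rfl⟩)

theorem exists_seq_mem_isLUB_range_isLUB_range (hs : s.Nonempty)
    (hφ : IsLUB (φ '' s) x) (hψ : IsLUB (ψ '' s) y) :
    ∃ u : ℕ → ι, (∀ n, u n ∈ s) ∧
      IsLUB (Set.range fun n => φ (u n)) x ∧ IsLUB (Set.range fun n => ψ (u n)) y := by
  obtain ⟨t₁, ht₁s, ht₁, hφt₁⟩ := exists_countable_subset_isLUB_image hφ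
  obtain ⟨t₂, ht₂s, ht₂, hψt₂⟩ := exists_countable_subset_isLUB_image hψ
  obtain ⟨i, hi⟩ := hs
  have hts : insert i (t₁ ∪ t₂) ⊆ s := Set.insert_subset hi (Set.union_subset ht₁s ht₂s)
  have ht₁t : t₁ ⊆ insert i (t₁ ∪ t₂) := Set.subset_union_left.trans (Set.subset_insert _ _)
  have ht₂t : t₂ ⊆ insert i (t₁ ∪ t₂) := Set.subset_union_right.trans (Set.subset_insert _ _)
  obtain ⟨u, hu⟩ := ((ht₁.union ht₂).insert i).exists_eq_range (Set.insert_nonempty _ _)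
  rw [hu] at hts ht₁t ht₂t
  refine ⟨u, Set.range_subset_iff.1 hts, ?_, ?_⟩
  · rw [Set.range_comp' φ u]
    exact hφt₁.of_subset_of_superset hφ (Set.image_mono ht₁t) (Set.image_mono hts)
  · rw [Set.range_comp' ψ u]
    exact hψt₂.of_subset_of_superset hψ (Set.image_mono ht₂t) (Set.image_mono hts)

end CountableSupremum

/-- The pairs `(a, b)` of a positive slope and a positive height for which the truncated line
`t ↦ min (a * t) b` is a minorant of `f` on `[0, ∞)`. -/
def truncatedLineMinorants (f : ℝ → ℝ) : Set (ℝ × ℝ) :=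
  {p | 0 < p.1 ∧ 0 < p.2 ∧ ∀ t, 0 ≤ t → min (p.1 * t) p.2 ≤ f t}

namespace truncatedLineMinorants

variable {f : ℝ → ℝ} {p : ℝ × ℝ} {a b α β : ℝ}

theorem fst_le (hp : p ∈ truncatedLineMinorants f)
    (hf_zero : Tendsto (fun t => f t / t) (𝓝[>] 0) (𝓝 α)) : p.1 ≤ α := by
  obtain ⟨hp₁, hp₂, hpf⟩ := hp
  refine ge_of_tendsto hf_zero ?_
  filter_upwards [Ioo_mem_nhdsGT (div_pos hp₂ hp₁)] with t ⟨ht_pos, ht_lt⟩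
  have h_line : p.1 * t ≤ p.2 := (mul_comm p.1 t).trans_le ((lt_div_iff₀ hp₁).1 ht_lt).le
  rw [le_div_iff₀ ht_pos, ← min_eq_left h_line]
  exact hpf t ht_pos.le

theorem snd_le (hp : p ∈ truncatedLineMinorants f) (hf_infty : Tendsto f atTop (𝓝 β)) :
    p.2 ≤ β := by
  obtain ⟨hp₁, hp₂, hpf⟩ := hp
  refine ge_of_tendsto hf_infty ?_
  filter_upwards [eventually_ge_atTop (p.2 / p.1)] with t ht
  have h_line : p.2 ≤ p.1 * t := (div_le_iff₀' hp₁).1 ht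
  rw [← min_eq_right h_line]
  exact hpf t ((div_pos hp₂ hp₁).le.trans ht)

theorem exists_mk_mem_of_eventually_nhdsGT (hf₀ : 0 ≤ f 0)
    (hf_pos : ∀ r > 0, ∃ c > 0, ∀ t ≥ r, c ≤ f t) (ha : 0 < a)
    (hfa : ∀ᶠ t in 𝓝[>] 0, a * t ≤ f t) : ∃ b, (a, b) ∈ truncatedLineMinorants f := by
  obtain ⟨r, hr, h_near⟩ := mem_nhdsGT_iff_exists_Ioo_subset.1 hfa
  obtain ⟨c, hc, h_far⟩ := hf_pos r hr
  refine ⟨c, ha, hc, fun t ht => ?_⟩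
  rcases ht.eq_or_lt with rfl | ht_pos
  · exact (min_le_left _ _).trans ((mul_zero a).trans_le hf₀)
  rcases lt_or_ge t r with htr | hrt
  · exact (min_le_left _ _).trans (h_near ⟨ht_pos, htr⟩)
  · exact (min_le_right _ _).trans (h_far t hrt)

theorem exists_mk_mem_of_eventually_atTop (hp : p ∈ truncatedLineMinorants f) (hb : 0 < b)
    (hfb : ∀ᶠ t in atTop, b ≤ f t) : ∃ a, (a, b) ∈ truncatedLineMinorants f := by
  obtain ⟨hp₁, hp₂, hpf⟩ := hp
  obtain ⟨T, hT, h_far⟩ :=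
    ((eventually_gt_atTop 0).and (eventually_forall_ge_atTop.2 hfb)).exists
  refine ⟨min p.1 (p.2 / T), lt_min hp₁ (div_pos hp₂ hT), hb, fun t ht => ?_⟩
  rcases le_total t T with htT | hTt
  · have h_slope : min p.1 (p.2 / T) * t ≤ p.1 * t := by gcongr; exact min_le_left _ _
    have h_height : min p.1 (p.2 / T) * t ≤ p.2 :=
      calc min p.1 (p.2 / T) * t ≤ p.2 / T * T := by gcongr; exact min_le_right _ _
        _ = p.2 := div_mul_cancel₀ _ hT.ne'
    exact (min_le_left _ _).trans ((le_min h_slope h_height).trans (hpf t ht))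
  · exact (min_le_right _ _).trans (h_far t hTt)

theorem exists_mk_mem_of_lt (hf₀ : 0 ≤ f 0)
    (hf_pos : ∀ r > 0, ∃ c > 0, ∀ t ≥ r, c ≤ f t)
    (hf_zero : Tendsto (fun t => f t / t) (𝓝[>] 0) (𝓝 α)) (ha : 0 < a) (haα : a < α) :
    ∃ b, (a, b) ∈ truncatedLineMinorants f := by
  refine exists_mk_mem_of_eventually_nhdsGT hf₀ hf_pos ha ?_
  filter_upwards [hf_zero.eventually_const_lt haα, self_mem_nhdsWithin] with t hat ht
  exact ((lt_div_iff₀ ht).1 hat).le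

theorem nonempty (hα : 0 < α) (hf₀ : 0 ≤ f 0)
    (hf_pos : ∀ r > 0, ∃ c > 0, ∀ t ≥ r, c ≤ f t)
    (hf_zero : Tendsto (fun t => f t / t) (𝓝[>] 0) (𝓝 α)) :
    (truncatedLineMinorants f).Nonempty :=
  let ⟨_, ha, haα⟩ := exists_between hα
  let ⟨_, hab⟩ := exists_mk_mem_of_lt hf₀ hf_pos hf_zero ha haα
  ⟨_, hab⟩

theorem isLUB_image_fst (hα : 0 < α) (hf₀ : 0 ≤ f 0)
    (hf_pos : ∀ r > 0, ∃ c > 0, ∀ t ≥ r, c ≤ f t)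
    (hf_zero : Tendsto (fun t => f t / t) (𝓝[>] 0) (𝓝 α)) :
    IsLUB (Prod.fst '' truncatedLineMinorants f) α := by
  refine ⟨Set.forall_mem_image.2 fun _ hp => fst_le hp hf_zero, fun w hw => ?_⟩
  by_contra! hwα
  obtain ⟨a, ha, haα⟩ := exists_between (max_lt hwα hα)
  obtain ⟨hwa, ha_pos⟩ := max_lt_iff.1 ha
  obtain ⟨b, hab⟩ := exists_mk_mem_of_lt hf₀ hf_pos hf_zero ha_pos haα
  exact hwa.not_ge (hw (Set.mem_image_of_mem Prod.fst hab))

theorem isLUB_image_snd (hne : (truncatedLineMinorants f).Nonempty)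
    (hf_infty : Tendsto f atTop (𝓝 β)) : IsLUB (Prod.snd '' truncatedLineMinorants f) β := by
  refine ⟨Set.forall_mem_image.2 fun _ hp => snd_le hp hf_infty, fun w hw => ?_⟩
  by_contra! hwβ
  obtain ⟨p, hp⟩ := hne
  have hβ : 0 < β := hp.2.1.trans_le (snd_le hp hf_infty)
  obtain ⟨b, hb, hbβ⟩ := exists_between (max_lt hwβ hβ)
  obtain ⟨hwb, hb_pos⟩ := max_lt_iff.1 hb
  obtain ⟨a, hab⟩ := exists_mk_mem_of_eventually_atTop hp hb_pos (hf_infty.eventually_const_le hbβ)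
  exact hwb.not_ge (hw (Set.mem_image_of_mem Prod.snd hab))

end truncatedLineMinorants

theorem exists_pos_forall_ge_le_of_monotoneOn {f : ℝ → ℝ} (hf_mono : MonotoneOn f (Set.Ioi 0))
    (hf : ∃ᶠ t in 𝓝[>] 0, 0 < f t) : ∀ r > 0, ∃ c > 0, ∀ t ≥ r, c ≤ f t := by
  intro r hr
  obtain ⟨s, hs, hs_pos, hsr⟩ := (hf.and_eventually (Ioo_mem_nhdsGT hr)).exists
  exact ⟨f s, hs, fun t ht => hf_mono hs_pos (hr.trans_le ht) (hsr.le.trans ht)⟩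

theorem statement5_general {f : ℝ → ℝ} {α β : ℝ} (hα : 0 < α) (hf₀ : 0 ≤ f 0)
    (hf_pos : ∀ r > 0, ∃ c > 0, ∀ t ≥ r, c ≤ f t)
    (hf_zero : Tendsto (fun t => f t / t) (𝓝[>] 0) (𝓝 α))
    (hf_infty : Tendsto f atTop (𝓝 β)) :
    ∃ a b : ℕ → ℝ, (∀ i, 0 < a i) ∧ (∀ i, 0 < b i) ∧
      (⨆ i, a i) = α ∧ (⨆ i, b i) = β ∧
      ∀ i, ∀ t, 0 ≤ t → min (a i * t) (b i) ≤ f t := by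
  have hne := truncatedLineMinorants.nonempty hα hf₀ hf_pos hf_zero
  obtain ⟨u, hu, hu_fst, hu_snd⟩ := exists_seq_mem_isLUB_range_isLUB_range hne
    (truncatedLineMinorants.isLUB_image_fst hα hf₀ hf_pos hf_zero)
    (truncatedLineMinorants.isLUB_image_snd hne hf_infty)
  exact ⟨fun i => (u i).1, fun i => (u i).2, fun i => (hu i).1, fun i => (hu i).2.1,
    hu_fst.ciSup_eq, hu_snd.ciSup_eq, fun i => (hu i).2.2⟩

theorem statement5
    (f : ℝ → ℝ) (α β : ℝ) (hα : 0 < α) (hβ : 0 < β)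
    (hf_nonneg : ∀ t, 0 ≤ t → 0 ≤ f t)
    (hf_mono : MonotoneOn f (Set.Ici 0))
    (hf_lsc : LowerSemicontinuousOn f (Set.Ici 0))
    (hf_zero : Tendsto (fun t => f t / t) (𝓝[>] 0) (𝓝 α))
    (hf_infty : Tendsto f atTop (𝓝 β)) :
    ∃ a b : ℕ → ℝ, (∀ i, 0 < a i) ∧ (∀ i, 0 < b i) ∧
      (⨆ i, a i) = α ∧ (⨆ i, b i) = β ∧
      ∀ i, ∀ t, 0 ≤ t → min (a i * t) (b i) ≤ f t := by
  have hf_near : ∀ᶠ t in 𝓝[>] 0, 0 < f t := by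
    filter_upwards [hf_zero.eventually_const_lt hα, self_mem_nhdsWithin] with t hft ht
    exact (div_pos_iff_of_pos_right ht).1 hft
  exact statement5_general hα (hf_nonneg 0 le_rfl)
    (exists_pos_forall_ge_le_of_monotoneOn (hf_mono.mono Set.Ioi_subset_Ici_self)
      hf_near.frequently) hf_zero hf_infty
end

section
/- Let n ≥ 1, let h : ℝⁿ → [0,∞) be integrable, let s > 0, and let U, U' ⊆ ℝⁿ be measurable sets such that x + s z ∈ U for every x ∈ U' and every z ∈ Q, where Q is the open unit cube in ℝⁿ centred at the origin. Then ∫_U ( s^{-n} ∫_{Q_s(x)} h(y) dy ) dx ≥ ∫_{U'} h(x) dx, where Q_s(x) := x + sQ. -/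
open MeasureTheory Filter Topology

/-- The open cube in `ℝ^n` of side `s` centred at `x`, with sides parallel to
the coordinate axes. -/
def openCube (n : ℕ) (s : ℝ) (x : Fin n → ℝ) : Set (Fin n → ℝ) :=
  {y | ∀ i, |y i - x i| < s / 2}

/-!
The average of `h` over `x - K` is the convolution of `h` with `1_K / μ K`. As `h` and `1_K` are
nonnegative, replacing `h` by `1_{U'} h` only decreases `∫_U h ⋆ 1_K`. The convolution of `1_{U'} h`
with `1_K` is supported in `K + U' ⊆ U`, so its integral over `U` is its integral over the whole
space, which is `(∫_{U'} h) (μ K)`. A centred cube `K` satisfies `x - K = x + K`.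
-/

open scoped Pointwise

section Convolution

open scoped Convolution

variable {G : Type*} [AddGroup G] [MeasurableSpace G] {μ : Measure G} {f g φ : G → ℝ}
  {K U U' : Set G}

theorem convolution_indicator_one [MeasurableAdd G] [MeasurableNeg G] (hK : MeasurableSet K)
    (x : G) :
    (f ⋆[.mul ℝ ℝ, μ] K.indicator 1) x = ∫ y in {y | x - y ∈ K}, f y ∂μ := by
  have hxK : MeasurableSet {y | x - y ∈ K} := by
    simp only [sub_eq_add_neg]
    exact measurable_neg.const_add x hK
  rw [convolution_mul, ← integral_indicator hxK]
  refine integral_congr_ae (.of_forall fun y => ?_)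
  by_cases hy : x - y ∈ K <;> simp [hy]

variable [MeasurableAdd₂ G] [MeasurableNeg G] [SFinite μ] [μ.IsAddRightInvariant]

theorem convolution_mono_left_ae (hf : Integrable f μ) (hg : Integrable g μ)
    (hφ : Integrable φ μ) (hφ_nonneg : 0 ≤ φ) (hfg : f ≤ᵐ[μ] g) :
    f ⋆[.mul ℝ ℝ, μ] φ ≤ᵐ[μ] g ⋆[.mul ℝ ℝ, μ] φ := by
  filter_upwards [hf.ae_convolution_exists (.mul ℝ ℝ) hφ, hg.ae_convolution_exists (.mul ℝ ℝ) hφ]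
    with x hfx hgx
  refine integral_mono_ae hfx hgx ?_
  filter_upwards [hfg] with y hy
  exact mul_le_mul_of_nonneg_right hy (hφ_nonneg _)

theorem setIntegral_mul_integral_le_setIntegral_convolution
    (hf : Integrable f μ) (hf_nonneg : 0 ≤ᵐ[μ] f) (hφ : Integrable φ μ) (hφ_nonneg : 0 ≤ φ)
    (hU' : MeasurableSet U') (hφU : φ.support + U' ⊆ U) :
    (∫ x in U', f x ∂μ) * ∫ x, φ x ∂μ ≤ ∫ x in U, (f ⋆[.mul ℝ ℝ, μ] φ) x ∂μ := by
  have hf' : Integrable (U'.indicator f) μ := hf.indicator hU'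
  have hle : U'.indicator f ≤ᵐ[μ] f := by
    filter_upwards [hf_nonneg] with x hx using Set.indicator_le_self' (fun _ _ => hx) x
  have hsupp : (U'.indicator f ⋆[.mul ℝ ℝ, μ] φ).support ⊆ U :=
    (support_convolution_subset_swap _).trans <|
      (Set.add_subset_add_left Set.support_indicator_subset).trans hφU
  calc (∫ x in U', f x ∂μ) * ∫ x, φ x ∂μ
      = ∫ x, (U'.indicator f ⋆[.mul ℝ ℝ, μ] φ) x ∂μ := by
        rw [integral_convolution _ hf' hφ, integral_indicator hU', ContinuousLinearMap.mul_apply']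
    _ = ∫ x in U, (U'.indicator f ⋆[.mul ℝ ℝ, μ] φ) x ∂μ :=
        (setIntegral_eq_integral_of_forall_compl_eq_zero fun x hx =>
          Function.notMem_support.1 fun hx' => hx (hsupp hx')).symm
    _ ≤ ∫ x in U, (f ⋆[.mul ℝ ℝ, μ] φ) x ∂μ :=
        setIntegral_mono_ae (hf'.integrable_convolution _ hφ).integrableOn
          (hf.integrable_convolution _ hφ).integrableOn
          (convolution_mono_left_ae hf' hf hφ hφ_nonneg hle)

theorem statement9_general (hf : Integrable f μ) (hf_nonneg : 0 ≤ᵐ[μ] f)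
    (hK : MeasurableSet K) (hK_pos : 0 < μ.real K) (hU' : MeasurableSet U') (hKU : K + U' ⊆ U) :
    ∫ x in U', f x ∂μ ≤ ∫ x in U, (μ.real K)⁻¹ * ∫ y in {y | x - y ∈ K}, f y ∂μ ∂μ := by
  have hK_int : Integrable (K.indicator (1 : G → ℝ)) μ :=
    (integrable_indicator_iff hK).2 (integrableOn_const (ENNReal.toReal_pos_iff.1 hK_pos).2.ne)
  have hK_nonneg : (0 : G → ℝ) ≤ K.indicator 1 := Set.indicator_nonneg fun _ _ => zero_le_one
  have hK_supp : (K.indicator (1 : G → ℝ)).support + U' ⊆ U :=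
    (Set.add_subset_add_right Set.support_indicator_subset).trans hKU
  have hconv := setIntegral_mul_integral_le_setIntegral_convolution hf hf_nonneg hK_int
    hK_nonneg hU' hK_supp
  simp only [integral_indicator_one hK, convolution_indicator_one hK] at hconv
  rwa [integral_const_mul, le_inv_mul_iff₀' hK_pos]

end Convolution

section OpenCube

variable {n : ℕ} {s t : ℝ}

theorem openCube_eq_ball (hs : 0 < s) (x : Fin n → ℝ) :
    openCube n s x = Metric.ball x (s / 2) := by
  ext y
  simp only [openCube, Set.mem_ofPred_eq, Metric.mem_ball, dist_pi_lt_iff (half_pos hs),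
    Real.dist_eq]

theorem measurableSet_openCube (hs : 0 < s) (x : Fin n → ℝ) : MeasurableSet (openCube n s x) := by
  rw [openCube_eq_ball hs]
  exact measurableSet_ball

theorem volume_real_openCube (hs : 0 < s) (x : Fin n → ℝ) :
    volume.real (openCube n s x) = s ^ n := by
  rw [openCube_eq_ball hs, measureReal_def, Real.volume_pi_ball x (half_pos hs),
    mul_div_cancel₀ s two_ne_zero, Fintype.card_fin, ENNReal.toReal_ofReal (pow_pos hs n).le]

theorem smul_openCube (hs : 0 < s) (ht : 0 < t) (x : Fin n → ℝ) :
    s • openCube n t x = openCube n (s * t) (s • x) := by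
  rw [openCube_eq_ball ht, openCube_eq_ball (mul_pos hs ht), smul_ball hs.ne',
    Real.norm_of_nonneg hs.le, mul_div_assoc]

theorem setOf_sub_mem_openCube_zero (s : ℝ) (x : Fin n → ℝ) :
    {y | x - y ∈ openCube n s 0} = openCube n s x := by
  ext y
  simp only [openCube, Set.mem_ofPred_eq, Pi.sub_apply, Pi.zero_apply, sub_zero, abs_sub_comm]

theorem openCube_zero_add_subset_iff (hs : 0 < s) {A B : Set (Fin n → ℝ)} :
    openCube n s 0 + A ⊆ B ↔ ∀ x ∈ A, ∀ z ∈ openCube n 1 0, x + s • z ∈ B := by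
  have hscale : s • openCube n 1 0 = openCube n s 0 := by
    rw [smul_openCube hs one_pos, mul_one, smul_zero]
  rw [← hscale, add_comm, Set.add_subset_iff]
  simp only [← Set.image_smul, Set.forall_mem_image]

end OpenCube

theorem statement9
    (n : ℕ) (hn : 1 ≤ n)
    (h : (Fin n → ℝ) → ℝ) (hh_nonneg : ∀ x, 0 ≤ h x) (hh_int : Integrable h)
    (s : ℝ) (hs : 0 < s)
    (U U' : Set (Fin n → ℝ)) (hU : MeasurableSet U) (hU' : MeasurableSet U')
    (hUU' : ∀ x ∈ U', ∀ z ∈ openCube n 1 0, x + s • z ∈ U) :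
    ∫ x in U', h x ≤ ∫ x in U, (s ^ n)⁻¹ * ∫ y in openCube n s x, h y := by
  have hvol : volume.real (openCube n s 0) = s ^ n := volume_real_openCube hs 0
  simpa only [hvol, setOf_sub_mem_openCube_zero] using
    statement9_general hh_int (.of_forall hh_nonneg) (measurableSet_openCube hs 0)
      (hvol ▸ pow_pos hs n) hU' ((openCube_zero_add_subset_iff hs).2 hUU')
end
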